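/- arXiv:2012.12547 — 3 statements merged into one kernel-verified Lean document; each statement's English description precedes it below -/
import Mathlib

section
/- Let A be a linear relation in a complex vector space H, let λ ∈ ℂ, let n ≥ 1, and suppose x_1, …, x_n ∈ H form a chain (0,x_1), (x_1,x_2), …, (x_{n−2},x_{n−1}), (x_{n−1},x_n) in A − λ (i.e., each listed pair belongs to A − λ). Define z_m = Σ_{i=1}^{m} binom(n−i−1, n−m−1) (−λ)^{m−i} x_i for m = 1, …, n−1. Then (0,z_1), (z_1,z_2), …, (z_{n−2},z_{n−1}), (z_{n−1},x_n) all belong to A, and span{z_1,…,z_{n−1}} = span{x_1,…,x_{n−1}}. -/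
/-! Put `c m i = (n-i-1).choose (n-m-1) * (-λ)^(m-i)`, so that `z m = ∑ c m i • x i`. Each chain pair
gives `(x i, x (i+1) + λ x i) ∈ A`, hence `(z m, ∑ c m i • (x (i+1) + λ x i)) ∈ A`. By Pascal's rule
`c (m+1) (i+1) = c m i + λ c m (i+1)`, so this second entry differs from `z (m+1)` (from `x n`, if
`m = n-1`) by a telescoping sum that collapses to a multiple of `x 1`; as `(0, x 1) ∈ A`, that multiple
can be discarded. The spans agree because the matrix `c` is unitriangular. -/

open Submodule Set

variable {H : Type*} [AddCommGroup H] [Module ℂ H]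

/-- A linear relation in `H`: a linear subspace of the product `H × H`. -/
abbrev LinRel (H : Type*) [AddCommGroup H] [Module ℂ H] : Type _ := Submodule ℂ (H × H)

namespace LinRel

/-- The relation `A - λ = {(x, y - λ x) : (x,y) ∈ A}`. -/
def shift (A : LinRel H) (lam : ℂ) : LinRel H :=
  A.map ((LinearMap.fst ℂ H H).prod (LinearMap.snd ℂ H H - lam • LinearMap.fst ℂ H H))

/-- The relation `λ A = {(x, λ y) : (x,y) ∈ A}`. -/
def smulRel (lam : ℂ) (A : LinRel H) : LinRel H :=
  A.map ((LinearMap.fst ℂ H H).prod (lam • LinearMap.snd ℂ H H))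

/-- The inverse relation `A⁻¹ = {(y,x) : (x,y) ∈ A}`. -/
def inv (A : LinRel H) : LinRel H :=
  A.map ((LinearMap.snd ℂ H H).prod (LinearMap.fst ℂ H H))

/-- The product (composition) `A B = {(x,y) : ∃ z, (x,z) ∈ B ∧ (z,y) ∈ A}`. -/
def comp (A B : LinRel H) : LinRel H where
  carrier := {p | ∃ z, (p.1, z) ∈ B ∧ (z, p.2) ∈ A}
  zero_mem' := ⟨0, B.zero_mem, A.zero_mem⟩
  add_mem' := by
    rintro p q ⟨z1, h1, h2⟩ ⟨z2, h3, h4⟩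
    exact ⟨z1 + z2, B.add_mem h1 h3, A.add_mem h2 h4⟩
  smul_mem' := by
    rintro c p ⟨z, h1, h2⟩
    exact ⟨c • z, B.smul_mem c h1, A.smul_mem c h2⟩

/-- The identity relation `I = {(x,x) : x ∈ H}`. -/
def idRel : LinRel H := LinearMap.graph (LinearMap.id : H →ₗ[ℂ] H)

/-- Powers: `A⁰ = I` and `Aᵏ = A · Aᵏ⁻¹`. -/
def pow (A : LinRel H) : ℕ → LinRel H
  | 0 => idRel
  | (k+1) => comp A (pow A k)

/-- The kernel `ker A = {x : (x,0) ∈ A}`. -/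
def ker (A : LinRel H) : Submodule ℂ H := A.comap (LinearMap.inl ℂ H H)

/-- The multivalued part `mul A = {y : (0,y) ∈ A}`. -/
def mul (A : LinRel H) : Submodule ℂ H := A.comap (LinearMap.inr ℂ H H)

lemma mem_ker {A : LinRel H} {x : H} : x ∈ ker A ↔ (x, (0:H)) ∈ A := by
  simp [ker, Submodule.mem_comap]

lemma mem_mul {A : LinRel H} {y : H} : y ∈ mul A ↔ ((0:H), y) ∈ A := by
  simp [mul, Submodule.mem_comap]

lemma ker_pow_le_succ (A : LinRel H) (i : ℕ) : ker (pow A i) ≤ ker (pow A (i+1)) := by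
  intro x hx
  rw [mem_ker] at hx ⊢
  exact ⟨0, hx, A.zero_mem⟩

lemma ker_pow_mono (A : LinRel H) : Monotone fun i => ker (pow A i) :=
  monotone_nat_of_le_succ (ker_pow_le_succ A)

lemma mul_pow_le_succ (A : LinRel H) : ∀ i, mul (pow A i) ≤ mul (pow A (i+1)) := by
  intro i
  induction i with
  | zero =>
    intro y hy
    rw [mem_mul] at hy ⊢
    have : y = 0 := by simpa [pow, idRel, LinearMap.mem_graph_iff] using hy
    subst this
    exact Submodule.zero_mem _
  | succ i ih =>
    intro y hy
    rw [mem_mul] at hy ⊢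
    obtain ⟨w, hw, hwy⟩ := hy
    exact ⟨w, mem_mul.mp (ih (mem_mul.mpr hw)), hwy⟩

lemma mul_pow_mono (A : LinRel H) : Monotone fun i => mul (pow A i) :=
  monotone_nat_of_le_succ (mul_pow_le_succ A)

/-- The root space `R_λ(A) = ⋃_{i ≥ 1} ker (A - λ)ⁱ`. -/
def rootSpace (A : LinRel H) (lam : ℂ) : Submodule ℂ H where
  carrier := ⋃ i : ℕ, (ker (pow (shift A lam) (i+1)) : Set H)
  zero_mem' := Set.mem_iUnion.2 ⟨0, Submodule.zero_mem _⟩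
  add_mem' := by
    intro a b ha hb
    obtain ⟨i, hi⟩ := Set.mem_iUnion.1 ha
    obtain ⟨j, hj⟩ := Set.mem_iUnion.1 hb
    exact Set.mem_iUnion.2 ⟨max i j, Submodule.add_mem _
      (ker_pow_mono _ (by omega : i + 1 ≤ max i j + 1) hi)
      (ker_pow_mono _ (by omega : j + 1 ≤ max i j + 1) hj)⟩
  smul_mem' := by
    intro c a ha
    obtain ⟨i, hi⟩ := Set.mem_iUnion.1 ha
    exact Set.mem_iUnion.2 ⟨i, Submodule.smul_mem _ c hi⟩

/-- The root space at infinity `R_∞(A) = ⋃_{i ≥ 1} mul Aⁱ`. -/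
def rootInf (A : LinRel H) : Submodule ℂ H where
  carrier := ⋃ i : ℕ, (mul (pow A (i+1)) : Set H)
  zero_mem' := Set.mem_iUnion.2 ⟨0, Submodule.zero_mem _⟩
  add_mem' := by
    intro a b ha hb
    obtain ⟨i, hi⟩ := Set.mem_iUnion.1 ha
    obtain ⟨j, hj⟩ := Set.mem_iUnion.1 hb
    exact Set.mem_iUnion.2 ⟨max i j, Submodule.add_mem _
      (mul_pow_mono _ (by omega : i + 1 ≤ max i j + 1) hi)
      (mul_pow_mono _ (by omega : j + 1 ≤ max i j + 1) hj)⟩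
  smul_mem' := by
    intro c a ha
    obtain ⟨i, hi⟩ := Set.mem_iUnion.1 ha
    exact Set.mem_iUnion.2 ⟨i, Submodule.smul_mem _ c hi⟩

/-- The singular chain space `R_c(A) = R_0(A) ∩ R_∞(A)`. -/
def singChain (A : LinRel H) : Submodule ℂ H := rootSpace A 0 ⊓ rootInf A

/-- The root space at a point of `ℂ ∪ {∞}` (modelled as `Option ℂ`, with `none = ∞`). -/
def rootSpaceE (A : LinRel H) : Option ℂ → Submodule ℂ H
  | none => rootInf A
  | some lam => rootSpace A lam

/-- `λ ∈ ℂ ∪ {∞}` is an eigenvalue of `A`. -/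
def isEigenvalue (A : LinRel H) : Option ℂ → Prop
  | none => mul A ≠ ⊥
  | some lam => ker (shift A lam) ≠ ⊥

end LinRel

lemma LinRel.mem_shift_iff {A : LinRel H} {lam : ℂ} {x y : H} :
    (x, y) ∈ LinRel.shift A lam ↔ (x, y + lam • x) ∈ A := by
  constructor
  · rintro ⟨⟨a, b⟩, hab, h⟩
    obtain ⟨rfl, rfl⟩ := Prod.mk.inj h
    simpa using hab
  · intro h
    exact ⟨_, h, by simp⟩

/-- A combination of chain pairs stays in `A`, and its second entry may be altered by any multiple of
the vector `X 0` of the multivalued part. -/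
lemma LinRel.sum_mem_of_chain {A : LinRel H} {lam : ℂ} {X : ℕ → H} {m : ℕ} (a : ℕ → ℂ) (b : ℂ)
    {w : H} (h0 : ((0 : H), X 0) ∈ A) (hX : ∀ i < m, (X i, X (i + 1) + lam • X i) ∈ A)
    (hw : w = ∑ i ∈ Finset.range m, a i • (X (i + 1) + lam • X i) + b • X 0) :
    (∑ i ∈ Finset.range m, a i • X i, w) ∈ A := by
  have h1 : ∑ i ∈ Finset.range m, a i • (X i, X (i + 1) + lam • X i) + b • ((0 : H), X 0) ∈ A :=
    A.add_mem (A.sum_mem fun i hi => A.smul_mem _ (hX i (Finset.mem_range.1 hi)))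
      (A.smul_mem _ h0)
  convert h1 using 1
  ext <;> simp [hw, Prod.fst_sum, Prod.snd_sum]

/-- The Pascal-rule identity behind the step `z m ↦ z (m+1)`, with `n = m + k + 2` and the vectors
indexed from `0`. -/
lemma sum_pascal_step (lam : ℂ) (X : ℕ → H) (m k : ℕ) :
    ∑ i ∈ Finset.range (m + 1), (((m + k - i).choose k : ℂ) * (-lam) ^ (m - i)) • X i =
      ∑ i ∈ Finset.range m, (((m + k - i).choose (k + 1) : ℂ) * (-lam) ^ (m - 1 - i)) •
        (X (i + 1) + lam • X i) +
      (((m + k).choose k : ℂ) * (-lam) ^ m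
        - lam * (((m + k).choose (k + 1) : ℂ) * (-lam) ^ (m - 1))) • X 0 := by
  have tel := Finset.sum_range_sub
    (fun i => (lam * (((m + k - i).choose (k + 1) : ℂ) * (-lam) ^ (m - 1 - i))) • X i) m
  simp only [Nat.add_sub_cancel_left, Nat.choose_succ_self, Nat.cast_zero, zero_mul, mul_zero,
    zero_smul, Nat.sub_zero, zero_sub] at tel
  rw [Finset.sum_range_succ', sub_smul, sub_eq_add_neg, ← tel, add_comm (_ • X 0) _, ← add_assoc,
    ← Finset.sum_add_distrib]
  simp only [Nat.sub_zero]
  congr 1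
  refine Finset.sum_congr rfl fun i hi => ?_
  obtain ⟨d, rfl⟩ := Nat.exists_eq_add_of_lt (Finset.mem_range.1 hi)
  have e1 : i + d + 1 + k - i = d + k + 1 := by omega
  have e2 : i + d + 1 + k - (i + 1) = d + k := by omega
  have e3 : i + d + 1 - 1 - i = d := by omega
  have e4 : i + d + 1 - 1 - (i + 1) = d - 1 := by omega
  have e5 : i + d + 1 - (i + 1) = d := by omega
  rw [e1, e2, e3, e4, e5, Nat.choose_succ_succ]
  push_cast
  -- for `d = 0` the truncated exponent `d - 1` is harmless: its binomial coefficient vanishes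
  rcases d with _ | d
  · simp
  · simp only [Nat.add_sub_cancel]
    module

lemma sum_geom_step (lam : ℂ) (X : ℕ → H) (m : ℕ) :
    X m = ∑ i ∈ Finset.range m, ((-lam) ^ (m - 1 - i)) • (X (i + 1) + lam • X i) +
      ((-lam) ^ m) • X 0 := by
  have tel := Finset.sum_range_sub (fun i => ((-lam) ^ (m - i)) • X i) m
  simp only [Nat.sub_self, pow_zero, one_smul, Nat.sub_zero] at tel
  rw [← sub_eq_iff_eq_add, ← tel]
  refine Finset.sum_congr rfl fun i hi => ?_
  obtain ⟨d, rfl⟩ := Nat.exists_eq_add_of_lt (Finset.mem_range.1 hi)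
  have e1 : i + d + 1 - (i + 1) = d := by omega
  have e2 : i + d + 1 - i = d + 1 := by omega
  have e3 : i + d + 1 - 1 - i = d := by omega
  rw [e1, e2, e3]
  module

/-- A unitriangular change of coefficients preserves the span of the vectors with index `1, …, N`. -/
lemma span_image_eq_of_unitriangular {x z : ℕ → H} {c : ℕ → ℕ → ℂ} {N : ℕ}
    (hz : ∀ m, z m = ∑ i ∈ Finset.Icc 1 m, c m i • x i) (hc : ∀ m ≤ N, c m m = 1) :
    Submodule.span ℂ (z '' Set.Icc 1 N) = Submodule.span ℂ (x '' Set.Icc 1 N) := by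
  apply le_antisymm
  · rw [Submodule.span_le]
    rintro _ ⟨m, ⟨_, hm2⟩, rfl⟩
    rw [hz]
    refine Submodule.sum_mem _ fun i hi => Submodule.smul_mem _ _ (Submodule.subset_span ?_)
    rw [Finset.mem_Icc] at hi
    exact ⟨i, ⟨hi.1, hi.2.trans hm2⟩, rfl⟩
  · rw [Submodule.span_le]
    rintro _ ⟨m, hm, rfl⟩
    induction m using Nat.strong_induction_on with
    | _ m ih =>
      obtain ⟨hm1, hm2⟩ := hm
      obtain ⟨m, rfl⟩ := Nat.exists_eq_add_of_le' hm1
      have h := hz (m + 1)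
      rw [Finset.sum_Icc_succ_top hm1, hc _ hm2, one_smul, ← sub_eq_iff_eq_add'] at h
      rw [← h]
      refine Submodule.sub_mem _ (Submodule.subset_span ⟨_, ⟨hm1, hm2⟩, rfl⟩)
        (Submodule.sum_mem _ fun i hi => Submodule.smul_mem _ _ ?_)
      rw [Finset.mem_Icc] at hi
      exact ih i (by omega) ⟨hi.1, by omega⟩

/-- transformation of a Jordan chain for `A - λ` (ending at `x n`)
into a chain for `A` with the same span of the intermediate vectors. -/
theorem statement_0 (A : LinRel H) (lam : ℂ) (n : ℕ) (hn : 1 ≤ n)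
    (x z : ℕ → H)
    (hx0 : ((0 : H), x 1) ∈ LinRel.shift A lam)
    (hxchain : ∀ i, 1 ≤ i → i ≤ n - 1 → (x i, x (i + 1)) ∈ LinRel.shift A lam)
    (hz : ∀ m, z m = ∑ i ∈ Finset.Icc 1 m,
      (((n - i - 1).choose (n - m - 1) : ℂ) * (-lam) ^ (m - i)) • x i) :
    (((0 : H), z 1) ∈ A) ∧
    (∀ m, 1 ≤ m → m ≤ n - 2 → (z m, z (m + 1)) ∈ A) ∧
    ((z (n - 1), x n) ∈ A) ∧
    Submodule.span ℂ (z '' Set.Icc 1 (n - 1)) = Submodule.span ℂ (x '' Set.Icc 1 (n - 1)) := by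
  simp only [LinRel.mem_shift_iff, smul_zero, add_zero] at hx0 hxchain
  have hz' : ∀ m, z m = ∑ i ∈ Finset.range m,
      (((n - 2 - i).choose (n - m - 1) : ℂ) * (-lam) ^ (m - 1 - i)) • x (i + 1) := by
    intro m
    rw [hz, Finset.range_eq_Ico, ← Finset.Ico_add_one_right_eq_Icc, ← Finset.sum_Ico_add' _ 0 m 1]
    refine Finset.sum_congr rfl fun i _ => ?_
    rw [show n - (i + 1) - 1 = n - 2 - i by omega, show m - (i + 1) = m - 1 - i by omega]
  refine ⟨?_, ?_, ?_, ?_⟩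
  · rw [hz' 1]
    simpa [show n - 1 - 1 = n - 2 by omega] using hx0
  · intro m hm1 hm2
    obtain ⟨k, rfl⟩ : ∃ k, n = m + k + 2 := ⟨n - 2 - m, by omega⟩
    have e1 : m + k + 2 - m - 1 = k + 1 := by omega
    have e2 : m + k + 2 - (m + 1) - 1 = k := by omega
    rw [hz' m, hz' (m + 1), e1, e2]
    simp only [Nat.add_sub_cancel]
    exact LinRel.sum_mem_of_chain (X := fun i => x (i + 1)) _ _ hx0
      (fun i hi => hxchain (i + 1) (by omega) (by omega)) (sum_pascal_step lam _ m k)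
  · obtain ⟨m, rfl⟩ := Nat.exists_eq_add_of_le' hn
    rw [hz']
    simp only [Nat.add_sub_cancel, Nat.add_sub_cancel_left, Nat.sub_self, Nat.choose_zero_right,
      Nat.cast_one, one_mul]
    exact LinRel.sum_mem_of_chain (X := fun i => x (i + 1)) _ _ hx0
      (fun i hi => hxchain (i + 1) (by omega) (by omega)) (sum_geom_step lam (fun i => x (i + 1)) m)
  · exact span_image_eq_of_unitriangular hz fun m _ => by simp
end

section
/- Let A be a linear relation in a complex vector space H. Then for every λ ∈ ℂ one has R_∞(A) = R_∞(A − λ). -/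
/-!
In fact `mul Aⁿ = mul (A - λ)ⁿ` for every `n`. If `(0, w) ∈ Aⁿ` and `(w, y) ∈ A`, then inductively
`w ∈ mul (A - λ)ⁿ`, and `(w, y - λ w) ∈ A - λ`, so `y - λ w ∈ mul (A - λ)ⁿ⁺¹`. As the spaces
`mul (A - λ)ⁿ` increase with `n`, also `λ w ∈ mul (A - λ)ⁿ⁺¹`, hence `y ∈ mul (A - λ)ⁿ⁺¹`.
The reverse inclusion is the same one for `A - λ` and `-λ`, because `(A - λ) + λ = A`.
-/

open Submodule Set

variable {H : Type*} [AddCommGroup H] [Module ℂ H]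

namespace LinRel

lemma mem_shift {A : LinRel H} {lam : ℂ} {x y : H} :
    (x, y) ∈ shift A lam ↔ (x, y + lam • x) ∈ A := by
  constructor
  · rintro ⟨⟨a, b⟩, hab, h⟩
    obtain ⟨rfl, rfl⟩ : a = x ∧ b - lam • a = y := by simpa using h
    simpa using hab
  · intro h
    exact ⟨(x, y + lam • x), h, by simp⟩

lemma shift_shift_neg (A : LinRel H) (lam : ℂ) : shift (shift A lam) (-lam) = A := by
  ext ⟨x, y⟩
  simp [mem_shift]

lemma mul_pow_le_shift (A : LinRel H) (lam : ℂ) :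
    ∀ n, mul (pow A n) ≤ mul (pow (shift A lam) n) := by
  intro n
  induction n with
  | zero => exact le_rfl
  | succ n ih =>
    intro y hy
    obtain ⟨w, hw, hwy⟩ := mem_mul.mp hy
    have hw' : w ∈ mul (pow (shift A lam) n) := ih (mem_mul.mpr hw)
    have h₁ : y - lam • w ∈ mul (pow (shift A lam) (n + 1)) :=
      mem_mul.mpr ⟨w, mem_mul.mp hw', mem_shift.mpr (by simpa using hwy)⟩
    have h₂ : lam • w ∈ mul (pow (shift A lam) (n + 1)) :=
      Submodule.smul_mem _ lam (mul_pow_le_succ _ n hw')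
    simpa using Submodule.add_mem _ h₁ h₂

end LinRel

/-- `R_∞(A) = R_∞(A - λ)` for every `λ ∈ ℂ`. -/
theorem statement_2 (A : LinRel H) (lam : ℂ) :
    LinRel.rootInf A = LinRel.rootInf (LinRel.shift A lam) := by
  have hA : LinRel.shift (LinRel.shift A lam) (-lam) = A := LinRel.shift_shift_neg A lam
  ext y
  constructor
  · intro hy
    obtain ⟨i, hi⟩ := Set.mem_iUnion.1 hy
    exact Set.mem_iUnion.2 ⟨i, LinRel.mul_pow_le_shift A lam (i + 1) hi⟩
  · intro hy
    obtain ⟨i, hi⟩ := Set.mem_iUnion.1 hy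
    have h := LinRel.mul_pow_le_shift (LinRel.shift A lam) (-lam) (i + 1) hi
    rw [hA] at h
    exact Set.mem_iUnion.2 ⟨i, h⟩
end

section
/- Let A be a linear relation in a complex vector space H and let λ ∈ ℂ with λ ≠ 0. Then (A − λ)⁻¹ = −(1/λ) − (1/λ²)(A⁻¹ − 1/λ)⁻¹; explicitly, a pair (u,v) belongs to (A − λ)⁻¹ if and only if there exists w with (u,w) ∈ (A⁻¹ − 1/λ)⁻¹ and v = −(1/λ)u − (1/λ²)w. -/
/-!
Unfolding the definitions, `(u, v) ∈ (A - λ)⁻¹` means `(v, u + λ v) ∈ A`, and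
`(u, w) ∈ (A⁻¹ - 1/λ)⁻¹` means `(u + (1/λ) w, w) ∈ A`. Under the invertible substitution
`v = -(1/λ) u - (1/λ²) w`, equivalently `w = -λ (u + λ v)`, the first pair is `-(1/λ)` times
the second, so closure of `A` under scalar multiplication gives both implications.
-/

open Submodule Set

variable {H : Type*} [AddCommGroup H] [Module ℂ H]

lemma LinRel.mem_shift_s4 (A : LinRel H) (lam : ℂ) (x y : H) :
    (x, y) ∈ LinRel.shift A lam ↔ (x, y + lam • x) ∈ A := by
  simp only [LinRel.shift, Submodule.mem_map]
  constructor
  · rintro ⟨⟨a, b⟩, hab, h⟩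
    obtain ⟨rfl, rfl⟩ := Prod.mk.inj h
    simpa using hab
  · intro h
    exact ⟨_, h, by simp⟩

lemma LinRel.mem_inv (A : LinRel H) (u v : H) : (u, v) ∈ LinRel.inv A ↔ (v, u) ∈ A := by
  simp [LinRel.inv, Submodule.mem_map]

/-- `(A - λ)⁻¹ = -(1/λ) - (1/λ²)(A⁻¹ - 1/λ)⁻¹`, stated explicitly:
`(u,v) ∈ (A - λ)⁻¹` iff there is `w` with `(u,w) ∈ (A⁻¹ - 1/λ)⁻¹` and
`v = -(1/λ) u - (1/λ²) w`. -/
theorem statement_4 (A : LinRel H) (lam : ℂ) (hlam : lam ≠ 0) (u v : H) :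
    (u, v) ∈ LinRel.inv (LinRel.shift A lam) ↔
      ∃ w, (u, w) ∈ LinRel.inv (LinRel.shift (LinRel.inv A) (1 / lam)) ∧
        v = -(1 / lam) • u - (1 / lam ^ 2) • w := by
  simp only [LinRel.mem_shift_s4, LinRel.mem_inv]
  constructor
  · intro h
    refine ⟨-lam • (u + lam • v), ?_, ?_⟩
    · convert A.smul_mem (-lam) h using 1
      ext
      · simp only [Prod.smul_mk]
        match_scalars <;> field_simp <;> ring
      · rfl
    · match_scalars <;> field_simp <;> ring
  · rintro ⟨w, h, rfl⟩
    convert A.smul_mem (-(1 / lam)) h using 1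
    ext
    · simp only [Prod.smul_mk]
      match_scalars <;> field_simp
    · simp only [Prod.smul_mk]
      match_scalars <;> field_simp <;> ring
end
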